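/- arXiv:2302.01138 — 2 statements merged into one kernel-verified Lean document; each statement's English description precedes it below -/
import Mathlib

section
/- For integers L ≥ 1 and p ≥ 1, the series Z'(L,p) := ∑_{k≥0} (12√3)^{-k} · #T²(L,p,k) equals (1/2) · 3^{L+p}/(L+p) · L·binom(2L,L) · p·binom(2p,p), and consequently Z'(L,p) = 6⁴·π/(L+p) · C¹(L) · C¹(p), where C¹(n) = 3^{n-2}/(4√(2π)) · n · binom(2n,n). -/
/-!
Writing `(2m + 3k - 2)!! / (k! (2m + k)!!) = 2ᵏ Aₖ(m) / (2m)`, where `Aₖ` is the `k`-th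
Fuss–Catalan polynomial of parameter `r = 3/2`, reduces the claim to the summation
`∑ₖ Aₖ(x) zᵏ = Bˣ`, where `B` is the smaller root of `B = 1 + z Bʳ` on `[1, ∞)`; at the critical
`z = 2 / 3 ^ (3/2)` this root is `B = 3`.

For the summation, let `F(x)` be the series. Its partial sums are at most `B ^ (x + 1)`: on
`[-1, 0]` because all terms but the constant `1` are nonpositive there, and beyond by the recurrence
`Aₖ₊₁(x + 1) = Aₖ₊₁(x) + Aₖ(x + r)`. The convolution identity makes `F` multiplicative, hence
`F(x) = cˣ` with `c = F(1)`; the bound on `F` forces `c ≤ B`, and the recurrence gives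
`c = 1 + z cʳ`, so `c` is the smaller root.
-/

section FussCatalan

open Polynomial Finset

lemma polynomial_eq_zero_of_eval_add_one_eq {R : Type*} [CommRing R] [IsDomain R]
    [CharZero R] {p : R[X]} (h_zero : p.eval 0 = 0)
    (h_add_one : ∀ x, p.eval (x + 1) = p.eval x) : p = 0 := by
  have h_nat (n : ℕ) : p.eval (n : R) = 0 := by
    induction n with
    | zero => simpa using h_zero
    | succ n ih => rw [Nat.cast_succ, h_add_one, ih]
  exact p.eq_zero_of_infinite_isRoot <|
    (Set.infinite_range_of_injective Nat.cast_injective).mono (Set.range_subset_iff.2 h_nat)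

lemma ascPochhammer_eval_nonneg {S : Type*} [Semiring S] [PartialOrder S] [IsStrictOrderedRing S]
    (n : ℕ) {s : S} (hs : 0 ≤ s) : 0 ≤ (ascPochhammer S n).eval s := by
  rcases hs.eq_or_lt with rfl | hs
  · rw [ascPochhammer_eval_zero]
    split_ifs
    exacts [zero_le_one, le_rfl]
  · exact (ascPochhammer_pos n s hs).le

variable {K : Type*} [Field K]

/-- The Fuss–Catalan (or Rothe) polynomial `Aₖ(x) = x / (x + r k) * (x + r k choose k)` of
parameter `r`, the coefficient of `zᵏ` in `Bˣ` for the power series `B = 1 + z Bʳ`. The factor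
`x + r k` of the binomial coefficient is cancelled, so that no division by it occurs. -/
noncomputable def fussCatalanPoly (r : K) : ℕ → K[X]
  | 0 => 1
  | k + 1 => C ((k + 1).factorial : K)⁻¹ * X *
      (ascPochhammer K k).comp (X + C ((r - 1) * (k + 1) + 1))

@[simp]
lemma eval_fussCatalanPoly_zero (r x : K) : (fussCatalanPoly r 0).eval x = 1 := by
  simp [fussCatalanPoly]

lemma eval_fussCatalanPoly_succ (r x : K) (k : ℕ) :
    (fussCatalanPoly r (k + 1)).eval x =
      ((k + 1).factorial : K)⁻¹ * x *
        (ascPochhammer K k).eval (x + ((r - 1) * (k + 1) + 1)) := by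
  simp [fussCatalanPoly]

@[simp]
lemma eval_zero_fussCatalanPoly_succ (r : K) (k : ℕ) :
    (fussCatalanPoly r (k + 1)).eval 0 = 0 := by
  simp [eval_fussCatalanPoly_succ]

variable [CharZero K]

lemma eval_add_one_fussCatalanPoly_succ (r x : K) (k : ℕ) :
    (fussCatalanPoly r (k + 1)).eval (x + 1) =
      (fussCatalanPoly r (k + 1)).eval x + (fussCatalanPoly r k).eval (x + r) := by
  cases k with
  | zero => simp [eval_fussCatalanPoly_succ]
  | succ k =>
    set y := x + r + ((r - 1) * (k + 1) + 1) with hy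
    have eval_left : (ascPochhammer K (k + 1)).eval (y - 1) =
        (y - 1) * (ascPochhammer K k).eval y := by
      simp [ascPochhammer_succ_left]
    have arg_add_one : x + 1 + ((r - 1) * ((k + 1 : ℕ) + 1) + 1) = y := by
      rw [hy]; push_cast; ring
    have arg_self : x + ((r - 1) * ((k + 1 : ℕ) + 1) + 1) = y - 1 := by
      rw [hy]; push_cast; ring
    rw [eval_fussCatalanPoly_succ, eval_fussCatalanPoly_succ, eval_fussCatalanPoly_succ, ← hy,
      arg_add_one, arg_self, eval_left, ascPochhammer_succ_eval, Nat.factorial_succ (k + 1)]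
    have : ((k + 1).factorial : K) ≠ 0 := by exact_mod_cast (k + 1).factorial_ne_zero
    have : (k : K) + 1 + 1 ≠ 0 := by exact_mod_cast (k + 1).succ_ne_zero
    push_cast
    field_simp
    rw [hy]
    ring

/-- The **Rothe–Hagen identity**: on coefficients, `Bˣ * Bʸ = B ^ (x + y)`. -/
theorem sum_antidiagonal_eval_fussCatalanPoly (r x y : K) (n : ℕ) :
    ∑ ij ∈ antidiagonal n, (fussCatalanPoly r ij.1).eval x * (fussCatalanPoly r ij.2).eval y =
      (fussCatalanPoly r n).eval (x + y) := by
  induction n generalizing x y with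
  | zero => simp
  | succ n ih =>
    let d : K[X] := ∑ ij ∈ antidiagonal (n + 1),
        fussCatalanPoly r ij.1 * C ((fussCatalanPoly r ij.2).eval y) -
      (fussCatalanPoly r (n + 1)).comp (X + C y)
    have eval_d (t : K) : d.eval t =
        (fussCatalanPoly r (n + 1)).eval y + ∑ ij ∈ antidiagonal n,
          (fussCatalanPoly r (ij.1 + 1)).eval t * (fussCatalanPoly r ij.2).eval y -
        (fussCatalanPoly r (n + 1)).eval (t + y) := by
      simp [d, eval_finsetSum, Nat.sum_antidiagonal_succ]
    have d_eq_zero : d = 0 := by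
      refine polynomial_eq_zero_of_eval_add_one_eq (by simp [eval_d]) fun t => ?_
      rw [eval_d, eval_d, add_right_comm t 1 y]
      simp only [eval_add_one_fussCatalanPoly_succ, add_mul, sum_add_distrib, ih]
      rw [add_right_comm t r y]
      ring
    have h := eval_d x
    rw [d_eq_zero, eval_zero] at h
    rw [Nat.sum_antidiagonal_succ, eval_fussCatalanPoly_zero, one_mul]
    exact (sub_eq_zero.1 h.symm)

lemma cast_doubleFactorial_add_two_mul (n i : ℕ) :
    ((n + 2 * i).doubleFactorial : K) =
      n.doubleFactorial * (2 ^ i * (ascPochhammer K i).eval ((n : K) / 2 + 1)) := by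
  induction i with
  | zero => simp
  | succ i ih =>
    rw [show n + 2 * (i + 1) = n + 2 * i + 2 by ring, Nat.doubleFactorial_add_two, Nat.cast_mul, ih,
      ascPochhammer_succ_eval]
    push_cast
    ring

lemma doubleFactorial_div_eq_eval_fussCatalanPoly {m : ℕ} (hm : 1 ≤ m) (k : ℕ) :
    ((2 * m + 3 * k - 2).doubleFactorial : K) / (k.factorial * (2 * m + k).doubleFactorial) =
      2 ^ k * (fussCatalanPoly (3 / 2) k).eval (m : K) / (2 * m) := by
  have cast_doubleFactorial_ne_zero (n : ℕ) : (n.doubleFactorial : K) ≠ 0 :=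
    Nat.cast_ne_zero.2 n.doubleFactorial_pos.ne'
  have cast_m_ne_zero : (m : K) ≠ 0 := Nat.cast_ne_zero.2 (by lia)
  cases k with
  | zero =>
    have top_factor : (2 * m).doubleFactorial = 2 * m * (2 * m - 2).doubleFactorial := by
      obtain ⟨l, rfl⟩ := Nat.exists_eq_add_of_le' hm
      exact Nat.doubleFactorial_add_two (2 * l)
    have := cast_doubleFactorial_ne_zero (2 * m - 2)
    simp only [mul_zero, add_zero, top_factor, Nat.factorial_zero, eval_fussCatalanPoly_zero]
    push_cast
    field_simp
  | succ k =>
    have arg_eq : ((2 * m + (k + 1) : ℕ) : K) / 2 + 1 = m + ((3 / 2 - 1) * (k + 1) + 1) := by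
      push_cast; ring
    rw [show 2 * m + 3 * (k + 1) - 2 = 2 * m + (k + 1) + 2 * k by lia,
      cast_doubleFactorial_add_two_mul, eval_fussCatalanPoly_succ, arg_eq]
    have := cast_doubleFactorial_ne_zero (2 * m + (k + 1))
    have : ((k + 1).factorial : K) ≠ 0 := Nat.cast_ne_zero.2 (k + 1).factorial_ne_zero
    field_simp
    ring

end FussCatalan

section Growth

lemma le_of_forall_pow_le_mul_pow {F : Type*} [Field F] [LinearOrder F] [IsStrictOrderedRing F]
    [Archimedean F] {a b C : F} (hb : 0 < b) (h : ∀ n : ℕ, a ^ n ≤ C * b ^ n) :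
    a ≤ b := by
  by_contra! hba
  obtain ⟨n, hn⟩ := pow_unbounded_of_one_lt C ((one_lt_div hb).2 hba)
  rw [div_pow, lt_div_iff₀ (by positivity)] at hn
  exact (h n).not_gt hn

lemma map_natCast_mul_eq_pow {R M : Type*} [Semiring R] [PartialOrder R] [IsOrderedRing R]
    [Monoid M] {f : R → M} (f_zero : f 0 = 1)
    (f_add : ∀ x y, 0 ≤ x → 0 ≤ y → f (x + y) = f x * f y) {x : R} (hx : 0 ≤ x) (n : ℕ) :
    f (n * x) = f x ^ n := by
  induction n with
  | zero => simp [f_zero]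
  | succ n ih =>
    rw [Nat.cast_succ, add_one_mul, f_add _ _ (mul_nonneg n.cast_nonneg hx) hx, ih, pow_succ]

lemma eq_rpow_of_map_add_of_one_le {f : ℝ → ℝ}
    (f_add : ∀ x y, 0 ≤ x → 0 ≤ y → f (x + y) = f x * f y) (one_le_f : ∀ x, 0 ≤ x → 1 ≤ f x)
    {x : ℝ} (hx : 0 ≤ x) : f x = f 1 ^ x := by
  have f_zero : f 0 = 1 := by
    have f_zero_ne_zero : f 0 ≠ 0 := (one_pos.trans_le (one_le_f 0 le_rfl)).ne'
    simpa [f_zero_ne_zero] using f_add 0 0 le_rfl le_rfl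
  have one_le_f_one : 1 ≤ f 1 := one_le_f 1 zero_le_one
  have f_mono {y z : ℝ} (hy : 0 ≤ y) (hyz : y ≤ z) : f y ≤ f z := by
    rw [← add_sub_cancel y z, f_add y (z - y) hy (sub_nonneg.2 hyz)]
    exact le_mul_of_one_le_right (zero_le_one.trans (one_le_f y hy))
      (one_le_f _ (sub_nonneg.2 hyz))
  have f_natCast (k : ℕ) : f k = f 1 ^ (k : ℝ) := by
    simpa using map_natCast_mul_eq_pow f_zero f_add zero_le_one k
  have rpow_mul_natCast (n : ℕ) : (f 1 ^ x) ^ n = f 1 ^ (n * x) := by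
    rw [← Real.rpow_mul_natCast (by positivity), mul_comm]
  have f_mul_natCast (n : ℕ) := map_natCast_mul_eq_pow f_zero f_add hx n
  have floor_le (n : ℕ) : (⌊n * x⌋₊ : ℝ) ≤ n * x := Nat.floor_le (by positivity)
  have le_floor_add_one (n : ℕ) : n * x ≤ (⌊n * x⌋₊ + 1 : ℕ) := by
    exact_mod_cast (Nat.lt_floor_add_one (n * x)).le
  have f_floor_add_one (n : ℕ) : f (⌊n * x⌋₊ + 1 : ℕ) = f 1 * f ⌊n * x⌋₊ := by
    rw [Nat.cast_succ, f_add _ _ (by positivity) zero_le_one, mul_comm]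
  apply le_antisymm
  · refine le_of_forall_pow_le_mul_pow (C := f 1) (by positivity) fun n => ?_
    calc f x ^ n = f (n * x) := (f_mul_natCast n).symm
      _ ≤ f (⌊n * x⌋₊ + 1 : ℕ) := f_mono (by positivity) (le_floor_add_one n)
      _ = f 1 * f 1 ^ (⌊n * x⌋₊ : ℝ) := by rw [f_floor_add_one, f_natCast]
      _ ≤ f 1 * (f 1 ^ x) ^ n := by
        rw [rpow_mul_natCast]
        gcongr
        exact floor_le n
  · refine le_of_forall_pow_le_mul_pow (C := f 1) (one_pos.trans_le (one_le_f x hx)) fun n => ?_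
    calc (f 1 ^ x) ^ n = f 1 ^ (n * x) := rpow_mul_natCast n
      _ ≤ f 1 ^ ((⌊n * x⌋₊ + 1 : ℕ) : ℝ) :=
        Real.rpow_le_rpow_of_exponent_le one_le_f_one (le_floor_add_one n)
      _ = f 1 * f ⌊n * x⌋₊ := by rw [← f_natCast, f_floor_add_one]
      _ ≤ f 1 * f (n * x) := by
        gcongr
        exact f_mono (by positivity) (floor_le n)
      _ = f 1 * f x ^ n := by rw [f_mul_natCast]

end Growth

section Series

open Finset

variable {r z B x y : ℝ}

/-- The condition `r * (B - 1) ≤ B` says that `B` does not exceed the maximiser `r / (r - 1)` of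
`t ↦ (t - 1) / t ^ r`, whose value at a root of `t = 1 + z * t ^ r` is `z`. -/
lemma root_eq_of_le (hr : 1 ≤ r) (hz : 0 ≤ z) (hBz : 1 + z * B ^ r = B)
    (hrB : r * (B - 1) ≤ B) {c : ℝ} (hc : 0 ≤ c) (hcz : 1 + z * c ^ r = c) (hcB : c ≤ B) :
    c = B := by
  by_contra hne
  have c_lt_B : c < B := lt_of_le_of_ne hcB hne
  have B_pos : 0 < B := hc.trans_lt c_lt_B
  have one_le_c : 1 ≤ c := hcz ▸ le_add_of_nonneg_right (by positivity)
  have c_sub_one : c - 1 = (B - 1) * (c / B) ^ r := by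
    have : B ^ r ≠ 0 := by positivity
    rw [Real.div_rpow hc B_pos.le, ← eq_sub_of_add_eq' hBz, ← eq_sub_of_add_eq' hcz]
    field_simp
  rcases hr.eq_or_lt with rfl | one_lt_r
  · rw [Real.rpow_one] at c_sub_one
    field_simp at c_sub_one
    linarith
  · have bernoulli : 1 + r * (c / B - 1) < (c / B) ^ r := by
      simpa using one_add_mul_self_lt_rpow_one_add (s := c / B - 1)
        (by linarith [div_nonneg hc B_pos.le])
        (sub_ne_zero.2 ((div_lt_one B_pos).2 c_lt_B).ne) one_lt_r
    have h : (B - 1) * (1 + r * (c / B - 1)) < c - 1 :=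
      c_sub_one ▸ mul_lt_mul_of_pos_left bernoulli (sub_pos.2 (one_le_c.trans_lt c_lt_B))
    have one_sub_ratio_nonneg : 0 ≤ 1 - c / B := sub_nonneg.2 ((div_le_one B_pos).2 hcB)
    refine lt_irrefl (B - c) ?_
    calc B - c < r * (B - 1) * (1 - c / B) := by linear_combination h
      _ ≤ B * (1 - c / B) := mul_le_mul_of_nonneg_right hrB one_sub_ratio_nonneg
      _ = B - c := by field_simp

lemma eval_fussCatalanPoly_nonneg (hr : 1 ≤ r) (hx : 0 ≤ x) (k : ℕ) :
    0 ≤ (fussCatalanPoly r k).eval x := by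
  cases k with
  | zero => simp
  | succ k =>
    have arg_nonneg : 0 ≤ x + ((r - 1) * (k + 1) + 1) := by
      linarith [mul_nonneg (sub_nonneg.2 hr) k.cast_add_one_pos.le]
    rw [eval_fussCatalanPoly_succ]
    exact mul_nonneg (by positivity) (ascPochhammer_eval_nonneg k arg_nonneg)

lemma eval_fussCatalanPoly_succ_nonpos (hr : 1 ≤ r) (hx : -1 ≤ x) (hx' : x ≤ 0) (k : ℕ) :
    (fussCatalanPoly r (k + 1)).eval x ≤ 0 := by
  have arg_nonneg : 0 ≤ x + ((r - 1) * (k + 1) + 1) := by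
    linarith [mul_nonneg (sub_nonneg.2 hr) k.cast_add_one_pos.le]
  rw [eval_fussCatalanPoly_succ]
  exact mul_nonpos_of_nonpos_of_nonneg
    (mul_nonpos_of_nonneg_of_nonpos (by positivity) hx') (ascPochhammer_eval_nonneg k arg_nonneg)

lemma sum_range_fussCatalanPoly_add_one (r z x : ℝ) (N : ℕ) :
    ∑ k ∈ range (N + 1), (fussCatalanPoly r k).eval (x + 1) * z ^ k =
      ∑ k ∈ range (N + 1), (fussCatalanPoly r k).eval x * z ^ k +
        z * ∑ k ∈ range N, (fussCatalanPoly r k).eval (x + r) * z ^ k := by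
  simp only [sum_range_succ', eval_add_one_fussCatalanPoly_succ, add_mul, sum_add_distrib,
    mul_sum, eval_fussCatalanPoly_zero, pow_succ', mul_left_comm z]
  ring

lemma sum_range_fussCatalanPoly_le (hr : 1 ≤ r) (hz : 0 ≤ z) (hB : 0 ≤ B)
    (hBz : 1 + z * B ^ r ≤ B) (hx : -1 ≤ x) (N : ℕ) :
    ∑ k ∈ range N, (fussCatalanPoly r k).eval x * z ^ k ≤ B ^ (x + 1) := by
  have one_le_B : 1 ≤ B := (le_add_of_nonneg_right (by positivity)).trans hBz
  have B_pos : 0 < B := one_pos.trans_le one_le_B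
  induction N generalizing x with
  | zero => simpa using Real.rpow_nonneg hB _
  | succ N ih =>
    have base {t : ℝ} (ht : -1 ≤ t) (ht' : t ≤ 0) :
        ∑ k ∈ range (N + 1), (fussCatalanPoly r k).eval t * z ^ k ≤ B ^ (t + 1) := by
      have tail_nonpos : ∑ k ∈ range N, (fussCatalanPoly r (k + 1)).eval t * z ^ (k + 1) ≤ 0 :=
        sum_nonpos fun k _ => mul_nonpos_of_nonpos_of_nonneg
          (eval_fussCatalanPoly_succ_nonpos hr ht ht' k) (by positivity)
      have one_le_rpow : 1 ≤ B ^ (t + 1) := Real.one_le_rpow one_le_B (by linarith)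
      rw [sum_range_succ', eval_fussCatalanPoly_zero, pow_zero]
      linarith
    have step {t : ℝ} (ht : -1 ≤ t)
        (h : ∑ k ∈ range (N + 1), (fussCatalanPoly r k).eval t * z ^ k ≤ B ^ (t + 1)) :
        ∑ k ∈ range (N + 1), (fussCatalanPoly r k).eval (t + 1) * z ^ k ≤ B ^ (t + 1 + 1) := by
      calc _ = ∑ k ∈ range (N + 1), (fussCatalanPoly r k).eval t * z ^ k +
              z * ∑ k ∈ range N, (fussCatalanPoly r k).eval (t + r) * z ^ k :=
            sum_range_fussCatalanPoly_add_one r z t N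
        _ ≤ B ^ (t + 1) + z * B ^ (t + r + 1) := by
            gcongr
            exact ih (by linarith)
        _ = B ^ (t + 1) * (1 + z * B ^ r) := by
            rw [add_right_comm, Real.rpow_add B_pos (t + 1) r]; ring
        _ ≤ B ^ (t + 1) * B := by gcongr
        _ = B ^ (t + 1 + 1) := (Real.rpow_add_one B_pos.ne' _).symm
    obtain ⟨n, hn⟩ := exists_nat_ge x
    induction n generalizing x with
    | zero => exact base hx (by simpa using hn)
    | succ n ihn =>
      rcases le_total x 0 with x_nonpos | x_nonneg
      · exact base hx x_nonpos
      · have h := step (t := x - 1) (by linarith)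
          (ihn (by linarith) (by push_cast at hn; linarith))
        rwa [sub_add_cancel] at h

lemma summable_fussCatalanPoly (hr : 1 ≤ r) (hz : 0 ≤ z) (hB : 0 ≤ B)
    (hBz : 1 + z * B ^ r ≤ B) (hx : 0 ≤ x) :
    Summable fun k => (fussCatalanPoly r k).eval x * z ^ k :=
  summable_of_sum_range_le
    (fun k => mul_nonneg (eval_fussCatalanPoly_nonneg hr hx k) (pow_nonneg hz k))
    (sum_range_fussCatalanPoly_le hr hz hB hBz (by linarith))

/-- The generalized binomial series `∑ Aₖ(x) zᵏ`, equal to `0` where it diverges. -/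
noncomputable def fussCatalanSeries (r z x : ℝ) : ℝ :=
  ∑' k, (fussCatalanPoly r k).eval x * z ^ k

lemma fussCatalanSeries_zero (r z : ℝ) : fussCatalanSeries r z 0 = 1 := by
  rw [fussCatalanSeries, tsum_eq_single 0 fun k hk => ?_]
  · simp
  · obtain ⟨k, rfl⟩ := Nat.exists_eq_succ_of_ne_zero hk
    simp

lemma fussCatalanSeries_add (hr : 1 ≤ r) (hz : 0 ≤ z) (hB : 0 ≤ B)
    (hBz : 1 + z * B ^ r ≤ B) (hx : 0 ≤ x) (hy : 0 ≤ y) :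
    fussCatalanSeries r z (x + y) = fussCatalanSeries r z x * fussCatalanSeries r z y := by
  have summable_norm {t : ℝ} (ht : 0 ≤ t) :=
    (summable_fussCatalanPoly hr hz hB hBz ht).norm
  rw [fussCatalanSeries, fussCatalanSeries, fussCatalanSeries,
    tsum_mul_tsum_eq_tsum_sum_antidiagonal_of_summable_norm (summable_norm hx) (summable_norm hy)]
  refine tsum_congr fun n => ?_
  rw [← sum_antidiagonal_eval_fussCatalanPoly, sum_mul]
  refine sum_congr rfl fun ij hij => ?_
  rw [← mem_antidiagonal.1 hij, pow_add]
  ring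

lemma one_le_fussCatalanSeries (hr : 1 ≤ r) (hz : 0 ≤ z) (hB : 0 ≤ B)
    (hBz : 1 + z * B ^ r ≤ B) (hx : 0 ≤ x) : 1 ≤ fussCatalanSeries r z x := by
  simpa [fussCatalanSeries] using (summable_fussCatalanPoly hr hz hB hBz hx).le_tsum 0
    fun k _ => mul_nonneg (eval_fussCatalanPoly_nonneg hr hx k) (pow_nonneg hz k)

lemma fussCatalanSeries_le (hr : 1 ≤ r) (hz : 0 ≤ z) (hB : 0 ≤ B)
    (hBz : 1 + z * B ^ r ≤ B) (hx : 0 ≤ x) : fussCatalanSeries r z x ≤ B ^ (x + 1) :=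
  (summable_fussCatalanPoly hr hz hB hBz hx).tsum_le_of_sum_range_le
    (sum_range_fussCatalanPoly_le hr hz hB hBz (by linarith))

lemma fussCatalanSeries_add_one (hr : 1 ≤ r) (hz : 0 ≤ z) (hB : 0 ≤ B)
    (hBz : 1 + z * B ^ r ≤ B) (hx : 0 ≤ x) :
    fussCatalanSeries r z (x + 1) =
      fussCatalanSeries r z x + z * fussCatalanSeries r z (x + r) := by
  have tendsto_sum {t : ℝ} (ht : 0 ≤ t) :=
    (summable_fussCatalanPoly hr hz hB hBz ht).hasSum.tendsto_sum_nat
  refine tendsto_nhds_unique ((tendsto_sum (by linarith)).comp (Filter.tendsto_add_atTop_nat 1)) ?_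
  simpa only [Function.comp_def, fussCatalanSeries, sum_range_fussCatalanPoly_add_one] using
    ((tendsto_sum hx).comp (Filter.tendsto_add_atTop_nat 1)).add
      ((tendsto_sum (add_nonneg hx (zero_le_one.trans hr))).const_mul z)

theorem fussCatalanSeries_eq_rpow (hr : 1 ≤ r) (hz : 0 ≤ z) (hB : 0 ≤ B)
    (hBz : 1 + z * B ^ r = B) (hrB : r * (B - 1) ≤ B) (hx : 0 ≤ x) :
    fussCatalanSeries r z x = B ^ x := by
  have one_le := fun t ht => one_le_fussCatalanSeries (x := t) hr hz hB hBz.le ht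
  have map_add := fun s t hs ht => fussCatalanSeries_add (x := s) (y := t) hr hz hB hBz.le hs ht
  have eq_rpow {t : ℝ} (ht : 0 ≤ t) :=
    eq_rpow_of_map_add_of_one_le map_add one_le ht
  have B_pos : 0 < B := one_pos.trans_le (hBz ▸ le_add_of_nonneg_right (by positivity))
  have base_le : fussCatalanSeries r z 1 ≤ B := by
    refine le_of_forall_pow_le_mul_pow (C := B) B_pos fun n => ?_
    have h := fussCatalanSeries_le hr hz hB hBz.le n.cast_nonneg
    rwa [eq_rpow n.cast_nonneg, Real.rpow_add_one B_pos.ne', Real.rpow_natCast,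
      Real.rpow_natCast, mul_comm] at h
  have base_eq : 1 + z * fussCatalanSeries r z 1 ^ r = fussCatalanSeries r z 1 := by
    have h := fussCatalanSeries_add_one hr hz hB hBz.le le_rfl
    rwa [zero_add, zero_add, fussCatalanSeries_zero, eq_rpow (zero_le_one.trans hr), eq_comm] at h
  rw [eq_rpow hx, root_eq_of_le hr hz hBz hrB (zero_le_one.trans (one_le 1 zero_le_one)) base_eq
    base_le]

theorem hasSum_fussCatalanPoly (hr : 1 ≤ r) (hz : 0 ≤ z) (hB : 0 ≤ B)
    (hBz : 1 + z * B ^ r = B) (hrB : r * (B - 1) ≤ B) (hx : 0 ≤ x) :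
    HasSum (fun k => (fussCatalanPoly r k).eval x * z ^ k) (B ^ x) := by
  rw [← fussCatalanSeries_eq_rpow hr hz hB hBz hrB hx]
  exact (summable_fussCatalanPoly hr hz hB hBz.le hx).hasSum

lemma hasSum_doubleFactorial_ratio (hz : 0 ≤ z) (hB : 0 ≤ B)
    (hBz : 1 + 2 * z * B ^ (3 / 2 : ℝ) = B) (hB3 : B ≤ 3) {m : ℕ} (hm : 1 ≤ m) :
    HasSum (fun k : ℕ => z ^ k * ((2 * m + 3 * k - 2).doubleFactorial /
      (k.factorial * (2 * m + k).doubleFactorial))) (B ^ m / (2 * m)) := by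
  have h := (hasSum_fussCatalanPoly (by norm_num) (by positivity) hB hBz (by linarith)
    m.cast_nonneg).div_const (2 * m)
  rw [Real.rpow_natCast] at h
  refine h.congr_fun fun k => ?_
  rw [doubleFactorial_div_eq_eval_fussCatalanPoly hm, mul_pow]
  ring

end Series

lemma three_zpow_sub_two_div_mul (L p : ℕ) :
    (3 : ℝ) ^ ((L : ℤ) - 2) / (4 * √(2 * Real.pi)) *
        ((3 : ℝ) ^ ((p : ℤ) - 2) / (4 * √(2 * Real.pi))) =
      3 ^ (L + p) / (2 * 6 ^ 4 * Real.pi) := by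
  have sq_sqrt_two_pi : √(2 * Real.pi) ^ 2 = 2 * Real.pi := Real.sq_sqrt (by positivity)
  rw [zpow_sub₀ three_ne_zero, zpow_sub₀ three_ne_zero, zpow_natCast, zpow_natCast, pow_add]
  field_simp
  rw [sq_sqrt_two_pi]
  ring

lemma one_add_critical_mul_three_rpow : 1 + 2 * ((12 * √3)⁻¹ * 4) * (3 : ℝ) ^ (3 / 2 : ℝ) = 3 := by
  have rpow_eq : (3 : ℝ) ^ (3 / 2 : ℝ) = 3 * √3 := by
    rw [Real.sqrt_eq_rpow, ← Real.rpow_one_add' (by norm_num) (by norm_num)]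
    norm_num
  rw [rpow_eq]
  field_simp
  norm_num

/-- For `L ≥ 1` and `p ≥ 1`, the series
`Z'(L,p) := ∑_{k≥0} (12√3)^{-k} · #T²(L,p,k)`, where
`#T²(L,p,k) = 4^k (2(L+p)+3k-2)!!/(k!(2(L+p)+k)!!) · L·binom(2L,L) · p·binom(2p,p)`,
equals `(1/2)·3^{L+p}/(L+p)·L·binom(2L,L)·p·binom(2p,p)`, and consequently
`Z'(L,p) = 6⁴·π/(L+p) · C¹(L) · C¹(p)` with `C¹(n) = 3^{n-2}/(4√(2π))·n·binom(2n,n)`. -/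
theorem statement2 (L p : ℕ) (hL : 1 ≤ L) (hp : 1 ≤ p) :
    (∑' k : ℕ,
        ((12 * Real.sqrt 3)⁻¹) ^ k *
          ((4 : ℝ) ^ k *
              (Nat.doubleFactorial (2 * (L + p) + 3 * k - 2) : ℝ) /
              ((Nat.factorial k : ℝ) * (Nat.doubleFactorial (2 * (L + p) + k) : ℝ)) *
            ((L : ℝ) * (Nat.choose (2 * L) L : ℝ)) *
            ((p : ℝ) * (Nat.choose (2 * p) p : ℝ)))
        = (1 / 2) * (3 : ℝ) ^ (L + p) / ((L : ℝ) + p) *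
            ((L : ℝ) * (Nat.choose (2 * L) L : ℝ)) *
            ((p : ℝ) * (Nat.choose (2 * p) p : ℝ)))
    ∧ (1 / 2) * (3 : ℝ) ^ (L + p) / ((L : ℝ) + p) *
          ((L : ℝ) * (Nat.choose (2 * L) L : ℝ)) *
          ((p : ℝ) * (Nat.choose (2 * p) p : ℝ))
        = 6 ^ 4 * Real.pi / ((L : ℝ) + p) *
            ((3 : ℝ) ^ ((L : ℤ) - 2) / (4 * Real.sqrt (2 * Real.pi)) *
              ((L : ℝ) * (Nat.choose (2 * L) L : ℝ))) *
            ((3 : ℝ) ^ ((p : ℤ) - 2) / (4 * Real.sqrt (2 * Real.pi)) *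
              ((p : ℝ) * (Nat.choose (2 * p) p : ℝ))) := by
  have h_cast : ((L + p : ℕ) : ℝ) = L + p := Nat.cast_add L p
  constructor
  · have h := ((hasSum_doubleFactorial_ratio (by positivity) zero_le_three
        one_add_critical_mul_three_rpow le_rfl (le_add_right hL : 1 ≤ L + p)).mul_right
      ((L : ℝ) * (2 * L).choose L)).mul_right ((p : ℝ) * (2 * p).choose p)
    rw [h_cast] at h
    convert h.tsum_eq using 1
    · refine tsum_congr fun k => ?_
      rw [mul_pow]
      ring
    · field_simp
  · calc _ = 6 ^ 4 * Real.pi / ((L : ℝ) + p) * (3 ^ (L + p) / (2 * 6 ^ 4 * Real.pi)) *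
          ((L * (2 * L).choose L) * (p * (2 * p).choose p)) := by field_simp
      _ = _ := by
        rw [← three_zpow_sub_two_div_mul]
        ring
end

section
/- Let q_k for k ∈ {1,0,-1,-2,...} be defined by q_1 = 1/√3 and q_k = 2·Z(k+1)·12^{-k} for k ≤ 0, where Z(m) = 6^m (2m-5)!!/(8√3·m!) (with the convention making Z(1) and Z(2) well-defined via (-1)!!=1 and the trivial triangulation). Then (q_k)_{k≤1} is a probability distribution on {...,-1,0,1} with mean zero: ∑_{k≤1} q_k = 1 and ∑_{k≤1} k·q_k = 0. -/
open Filter Topology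

/-!
Without their `m = 0` term, both sums are values at `1` of Gauss hypergeometric series; so are, up
to a missing first term, the sums of the even and of the odd terms of the series defining `Z(1)`.
Hence everything follows from Gauss's theorem
`F(a, b; c; 1) = Γ(c) Γ(c - a - b) / (Γ(c - a) Γ(c - b))`.

To prove the latter, write `F(c)` for the left side and `fₙ` for its terms. The contiguous relation
`c (c - a - b) F(c) = (c - a) (c - b) F(c + 1)` holds because the difference of the two sides
telescopes, with partial sums `-c n fₙ`, and the limit of `n fₙ` can only be `0` when `∑ fₙ`
converges. Iterating it gives `F(c)` as a finite product times `F(c + N)`; here `F(c + N) → 1` by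
dominated convergence, and by Euler's limit formula the product tends to the quotient of Gammas.
-/

theorem summable_of_eventually_le_sub {u v : ℕ → ℝ} (hu : ∀ n, 0 ≤ u n) (hv : ∀ n, 0 ≤ v n)
    (h : ∀ᶠ n in atTop, u n ≤ v n - v (n + 1)) : Summable u := by
  obtain ⟨N, hN⟩ := eventually_atTop.1 h
  rw [← summable_nat_add_iff N]
  refine summable_of_sum_range_le (c := v N) (fun n => hu _) fun n => ?_
  calc ∑ i ∈ Finset.range n, u (i + N)
      ≤ ∑ i ∈ Finset.range n, (v (i + N) - v (i + 1 + N)) :=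
        Finset.sum_le_sum fun i _ => by
          simpa only [add_right_comm] using hN (i + N) (Nat.le_add_left N i)
    _ = v N - v (n + N) := by simpa using Finset.sum_range_sub' (fun i => v (i + N)) n
    _ ≤ v N := sub_le_self _ (hv _)

theorem eq_zero_of_summable_of_tendsto_natCast_mul {f : ℕ → ℝ} {l : ℝ} (hf : Summable f)
    (h : Tendsto (fun n : ℕ => (n : ℝ) * f n) atTop (𝓝 l)) : l = 0 := by
  by_contra hl
  have hO : (fun n : ℕ => (n : ℝ)⁻¹) =O[atTop] f := by
    have hinv := (h.inv₀ hl).isBigO_one ℝ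
    refine (hinv.mul (Asymptotics.isBigO_refl f atTop)).congr' ?_
      (.of_forall fun n => one_mul (f n))
    filter_upwards [h.eventually_ne hl] with n hn
    rw [mul_inv, inv_mul_cancel_right₀ (right_ne_zero_of_mul hn)]
  exact Real.not_summable_natCast_inv (summable_of_isBigO_nat hf hO)

section Field

variable {K : Type*} [Field K]

theorem ordinaryHypergeometricCoefficient_zero (a b c : K) :
    ordinaryHypergeometricCoefficient a b c 0 = 1 := by
  simp [ordinaryHypergeometricCoefficient]

variable {a b c : K} {n : ℕ}

theorem ordinaryHypergeometricCoefficient_succ [CharZero K] (hcn : c + n ≠ 0) :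
    ((n : K) + 1) * (c + n) * ordinaryHypergeometricCoefficient a b c (n + 1) =
      (a + n) * (b + n) * ordinaryHypergeometricCoefficient a b c n := by
  have hn : (n : K) + 1 ≠ 0 := n.cast_add_one_ne_zero
  simp only [ordinaryHypergeometricCoefficient, ascPochhammer_succ_eval, Nat.factorial_succ,
    Nat.cast_mul, Nat.cast_succ, mul_inv]
  field_simp

theorem ordinaryHypergeometricCoefficient_add_one_right (hc : c ≠ 0) (hcn : c + n ≠ 0) :
    (c + n) * ordinaryHypergeometricCoefficient a b (c + 1) n =
      c * ordinaryHypergeometricCoefficient a b c n := by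
  have hpoch : c * (ascPochhammer K n).eval (c + 1) = (ascPochhammer K n).eval c * (c + n) := by
    rw [← ascPochhammer_succ_eval, ascPochhammer_succ_left]
    simp
  simp only [ordinaryHypergeometricCoefficient, eq_div_of_mul_eq hc ((mul_comm _ _).trans hpoch),
    div_eq_mul_inv, mul_inv]
  field_simp

end Field

section Real

variable {a b c : ℝ}

theorem abs_ordinaryHypergeometricCoefficient_add_natCast_le (hc : 0 < c) (N n : ℕ) :
    |ordinaryHypergeometricCoefficient a b (c + N) n| ≤
      |ordinaryHypergeometricCoefficient a b c n| := by
  induction N with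
  | zero => simp
  | succ N ih =>
    refine le_trans ?_ ih
    have hcN : 0 < c + N := by positivity
    have hcNn : 0 < c + N + n := by positivity
    have h := congrArg abs (ordinaryHypergeometricCoefficient_add_one_right (a := a) (b := b)
      hcN.ne' hcNn.ne')
    rw [abs_mul (c + N + n), abs_mul (c + N), abs_of_pos hcN, abs_of_pos hcNn] at h
    push_cast
    rw [← add_assoc]
    refine le_of_mul_le_mul_left ?_ hcN
    rw [← h]
    exact mul_le_mul_of_nonneg_right (le_add_of_nonneg_right n.cast_nonneg) (abs_nonneg _)

theorem tendsto_ordinaryHypergeometricCoefficient_atTop (a b : ℝ) (n : ℕ) :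
    Tendsto (fun c => ordinaryHypergeometricCoefficient a b c (n + 1)) atTop (𝓝 0) := by
  have hpoch : Tendsto (fun c : ℝ => (ascPochhammer ℝ (n + 1)).eval c) atTop atTop :=
    Polynomial.tendsto_atTop_of_leadingCoeff_nonneg _
      (Polynomial.natDegree_pos_iff_degree_pos.1
        (n.succ_pos.trans_eq (ascPochhammer_natDegree ℝ (n + 1)).symm))
      (zero_le_one.trans_eq (monic_ascPochhammer ℝ (n + 1)).leadingCoeff.symm)
  simpa using hpoch.inv_tendsto_atTop.const_mul _

theorem summable_ordinaryHypergeometricCoefficient (hc : 0 < c) (habc : a + b < c) :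
    Summable (ordinaryHypergeometricCoefficient a b c) := by
  set f := ordinaryHypergeometricCoefficient a b c
  set δ := (c - a - b) / 2 with hδ
  have hδ_pos : 0 < δ := by linarith
  have hraabe : ∀ᶠ n : ℕ in atTop, δ * |f n| ≤ n * |f n| - (n + 1 : ℕ) * |f (n + 1)| := by
    have htop := tendsto_natCast_atTop_atTop (R := ℝ)
    filter_upwards [htop.eventually_ge_atTop (-a), htop.eventually_ge_atTop (-b),
      (htop.const_mul_atTop hδ_pos).eventually_ge_atTop (a * b + δ * c)] with n ha hb hn
    have hcn : 0 < c + n := by positivity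
    have hpos : 0 < ((n : ℝ) + 1) * (c + n) := by positivity
    have hrec : ((n : ℝ) + 1) * (c + n) * |f (n + 1)| = (a + n) * (b + n) * |f n| := by
      have hab : 0 ≤ (a + n) * (b + n) := mul_nonneg (by linarith) (by linarith)
      calc ((n : ℝ) + 1) * (c + n) * |f (n + 1)| = |((n : ℝ) + 1) * (c + n) * f (n + 1)| := by
            rw [abs_mul (_ * _) (f (n + 1)), abs_of_pos hpos]
        _ = |(a + n) * (b + n) * f n| :=
            congrArg abs (ordinaryHypergeometricCoefficient_succ hcn.ne')
        _ = (a + n) * (b + n) * |f n| := by rw [abs_mul (_ * _) (f n), abs_of_nonneg hab]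
    have hfn := mul_le_mul_of_nonneg_right hn (abs_nonneg (f n))
    have hδ' : 2 * δ = c - a - b := by simp only [hδ]; ring
    refine le_of_mul_le_mul_left ?_ hcn
    push_cast
    linear_combination hfn + hrec - n * |f n| * hδ'
  have h := summable_of_eventually_le_sub (u := fun n => δ * |f n|) (v := fun n => n * |f n|)
    (fun n => by positivity) (fun n => by positivity) hraabe
  exact ((summable_mul_left_iff hδ_pos.ne').1 h).of_abs

theorem tsum_ordinaryHypergeometricCoefficient_add_one (hc : 0 < c) (habc : a + b < c) :
    c * (c - a - b) * ∑' n, ordinaryHypergeometricCoefficient a b c n =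
      (c - a) * (c - b) * ∑' n, ordinaryHypergeometricCoefficient a b (c + 1) n := by
  set f := ordinaryHypergeometricCoefficient a b c
  set g := ordinaryHypergeometricCoefficient a b (c + 1)
  have hf : Summable f := summable_ordinaryHypergeometricCoefficient hc habc
  have hg : Summable g := summable_ordinaryHypergeometricCoefficient (by linarith) (by linarith)
  have hsum := (hf.hasSum.mul_left (c * (c - a - b))).sub (hg.hasSum.mul_left ((c - a) * (c - b)))
  have htel (n : ℕ) : c * (c - a - b) * f n - (c - a) * (c - b) * g n =
      -c * ((n + 1 : ℕ) * f (n + 1)) - -c * (n * f n) := by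
    have hcn : c + n ≠ 0 := by positivity
    have h := ordinaryHypergeometricCoefficient_succ (a := a) (b := b) hcn
    have h' := ordinaryHypergeometricCoefficient_add_one_right (a := a) (b := b) hc.ne' hcn
    apply mul_left_cancel₀ hcn
    push_cast
    linear_combination -(c - a) * (c - b) * h' + c * h
  have hlim := hsum.tendsto_sum_nat
  simp only [htel, Finset.sum_range_sub fun n : ℕ => -c * (n * f n), Nat.cast_zero, zero_mul,
    mul_zero, sub_zero] at hlim
  have hlim' : Tendsto (fun n : ℕ => (n : ℝ) * (-c * f n)) atTop (𝓝 _) :=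
    hlim.congr fun n => mul_left_comm _ _ _
  exact sub_eq_zero.1 (eq_zero_of_summable_of_tendsto_natCast_mul (hf.mul_left (-c)) hlim')

theorem tsum_ordinaryHypergeometricCoefficient_add_natCast (hc : 0 < c) (habc : a + b < c)
    (N : ℕ) :
    (∏ j ∈ Finset.range N, (c + j) * (c - a - b + j)) *
        ∑' n, ordinaryHypergeometricCoefficient a b c n =
      (∏ j ∈ Finset.range N, (c - a + j) * (c - b + j)) *
        ∑' n, ordinaryHypergeometricCoefficient a b (c + N) n := by
  induction N with
  | zero => simp
  | succ N ih =>
    have := N.cast_nonneg (α := ℝ)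
    have h := tsum_ordinaryHypergeometricCoefficient_add_one (a := a) (b := b) (c := c + N)
      (by linarith) (by linarith)
    rw [Finset.prod_range_succ, Finset.prod_range_succ, Nat.cast_succ, ← add_assoc]
    linear_combination (c + N) * (c - a - b + N) * ih +
      (∏ j ∈ Finset.range N, (c - a + j) * (c - b + j)) * h

theorem tendsto_tsum_ordinaryHypergeometricCoefficient (hc : 0 < c) (habc : a + b < c) :
    Tendsto (fun N : ℕ => ∑' n, ordinaryHypergeometricCoefficient a b (c + N) n) atTop (𝓝 1) := by
  have htop : Tendsto (fun N : ℕ => c + N) atTop atTop :=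
    tendsto_atTop_add_const_left _ _ tendsto_natCast_atTop_atTop
  rw [← tsum_ite_eq (0 : ℕ) fun _ => (1 : ℝ)]
  refine tendsto_tsum_of_dominated_convergence
    (summable_ordinaryHypergeometricCoefficient hc habc).abs (fun n => ?_)
    (.of_forall fun N n => abs_ordinaryHypergeometricCoefficient_add_natCast_le hc N n)
  cases n with
  | zero => simp only [ordinaryHypergeometricCoefficient_zero, ↓reduceIte, tendsto_const_nhds]
  | succ n => exact (tendsto_ordinaryHypergeometricCoefficient_atTop a b n).comp htop

theorem GammaSeq_mul_GammaSeq {r s t u : ℝ} (h : r + s = t + u) (hr : ∀ m : ℕ, r ≠ -m)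
    (hs : ∀ m : ℕ, s ≠ -m) (ht : ∀ m : ℕ, t ≠ -m) (hu : ∀ m : ℕ, u ≠ -m)
    {n : ℕ} (hn : n ≠ 0) :
    Real.GammaSeq r n * Real.GammaSeq s n * ∏ j ∈ Finset.range (n + 1), (r + j) * (s + j) =
      Real.GammaSeq t n * Real.GammaSeq u n * ∏ j ∈ Finset.range (n + 1), (t + j) * (u + j) := by
  have hprod {x : ℝ} (hx : ∀ m : ℕ, x ≠ -m) : ∏ j ∈ Finset.range (n + 1), (x + j) ≠ 0 :=
    Finset.prod_ne_zero_iff.2 fun j _ => mt eq_neg_of_add_eq_zero_left (hx j)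
  have hn' : (0 : ℝ) < n := by positivity
  have hpow : (n : ℝ) ^ r * (n : ℝ) ^ s = (n : ℝ) ^ t * (n : ℝ) ^ u := by
    rw [← Real.rpow_add hn', ← Real.rpow_add hn', h]
  simp only [Real.GammaSeq, Finset.prod_mul_distrib]
  field_simp [hprod hr, hprod hs, hprod ht, hprod hu]
  exact hpow

theorem tsum_ordinaryHypergeometricCoefficient_eq_zero (hc : 0 < c) (habc : a + b < c) {m : ℕ}
    (hm : (c - a + m) * (c - b + m) = 0) :
    ∑' n, ordinaryHypergeometricCoefficient a b c n = 0 := by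
  have h := tsum_ordinaryHypergeometricCoefficient_add_natCast hc habc (m + 1)
  rw [Finset.prod_eq_zero (f := fun j : ℕ => (c - a + j) * (c - b + j))
    (Finset.self_mem_range_succ m) hm, zero_mul] at h
  refine (mul_eq_zero.1 h).resolve_left (Finset.prod_ne_zero_iff.2 fun j _ => ?_)
  have := j.cast_nonneg (α := ℝ)
  exact mul_ne_zero (by linarith) (by linarith)

theorem Gamma_mul_Gamma_eq_tsum_ordinaryHypergeometricCoefficient_mul (hc : 0 < c)
    (habc : a + b < c) (hca : ∀ m : ℕ, c - a ≠ -m) (hcb : ∀ m : ℕ, c - b ≠ -m) :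
    Real.Gamma c * Real.Gamma (c - a - b) =
      (∑' n, ordinaryHypergeometricCoefficient a b c n) *
        (Real.Gamma (c - a) * Real.Gamma (c - b)) := by
  have hne_neg {x : ℝ} (hx : 0 < x) (m : ℕ) : x ≠ -m :=
    ((neg_nonpos.2 m.cast_nonneg).trans_lt hx).ne'
  set F : ℝ → ℝ := fun x => ∑' n, ordinaryHypergeometricCoefficient a b x n
  have hstep : ∀ᶠ n : ℕ in atTop, Real.GammaSeq c n * Real.GammaSeq (c - a - b) n *
      F (c + (n + 1 : ℕ)) = F c * (Real.GammaSeq (c - a) n * Real.GammaSeq (c - b) n) := by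
    filter_upwards [eventually_ne_atTop 0] with n hn
    have hGamma := GammaSeq_mul_GammaSeq (by ring) (hne_neg hc)
      (hne_neg (x := c - a - b) (by linarith)) hca hcb hn
    have hgauss := tsum_ordinaryHypergeometricCoefficient_add_natCast hc habc (n + 1)
    have hprod : ∏ j ∈ Finset.range (n + 1), (c - a + j) * (c - b + j) ≠ 0 :=
      Finset.prod_ne_zero_iff.2 fun j _ => mul_ne_zero
        (mt eq_neg_of_add_eq_zero_left (hca j)) (mt eq_neg_of_add_eq_zero_left (hcb j))
    apply mul_left_cancel₀ hprod
    linear_combination F c * hGamma - Real.GammaSeq c n * Real.GammaSeq (c - a - b) n * hgauss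
  have hleft := (((Real.GammaSeq_tendsto_Gamma c).mul
    (Real.GammaSeq_tendsto_Gamma (c - a - b))).mul
      ((tendsto_tsum_ordinaryHypergeometricCoefficient hc habc).comp (tendsto_add_atTop_nat 1)))
  have hright := ((Real.GammaSeq_tendsto_Gamma (c - a)).mul
    (Real.GammaSeq_tendsto_Gamma (c - b))).const_mul (F c)
  rw [← mul_one (_ * _)]
  exact tendsto_nhds_unique (hleft.congr' hstep) hright

/-- At the poles of `Γ (c - a)` or `Γ (c - b)` the quotient is `0`, as it should be: there
`Real.Gamma` takes the junk value `0`, and `x / 0 = 0`. -/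
theorem hasSum_ordinaryHypergeometricCoefficient (hc : 0 < c) (habc : a + b < c) :
    HasSum (ordinaryHypergeometricCoefficient a b c)
      (Real.Gamma c * Real.Gamma (c - a - b) / (Real.Gamma (c - a) * Real.Gamma (c - b))) := by
  convert (summable_ordinaryHypergeometricCoefficient hc habc).hasSum using 1
  by_cases h0 : Real.Gamma (c - a) * Real.Gamma (c - b) = 0
  · obtain ⟨m, hm⟩ : ∃ m : ℕ, (c - a + m) * (c - b + m) = 0 := by
      simpa only [mul_eq_zero, Real.Gamma_eq_zero_iff, eq_neg_iff_add_eq_zero, exists_or] using h0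
    rw [h0, div_zero, tsum_ordinaryHypergeometricCoefficient_eq_zero hc habc hm]
  · obtain ⟨hca, hcb⟩ := mul_ne_zero_iff.1 h0
    rw [div_eq_iff h0]
    exact Gamma_mul_Gamma_eq_tsum_ordinaryHypergeometricCoefficient_mul hc habc
      (fun m hm => hca ((Real.Gamma_eq_zero_iff _).2 ⟨m, hm⟩))
      (fun m hm => hcb ((Real.Gamma_eq_zero_iff _).2 ⟨m, hm⟩))

theorem hasSum_of_hypergeometric_recurrence {t : ℕ → ℝ} (hc : 0 < c) (habc : a + b < c)
    (ht : ∀ n : ℕ, ((n : ℝ) + 1) * (c + n) * t (n + 1) = (a + n) * (b + n) * t n) :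
    HasSum t (t 0 * (Real.Gamma c * Real.Gamma (c - a - b) /
      (Real.Gamma (c - a) * Real.Gamma (c - b)))) := by
  have hcoeff (n : ℕ) : t 0 * ordinaryHypergeometricCoefficient a b c n = t n := by
    induction n with
    | zero => rw [ordinaryHypergeometricCoefficient_zero, mul_one]
    | succ n ih =>
      have hcn : c + n ≠ 0 := by positivity
      have hne : ((n : ℝ) + 1) * (c + n) ≠ 0 := by positivity
      apply mul_left_cancel₀ hne
      linear_combination (a + n) * (b + n) * ih - ht n +
        t 0 * ordinaryHypergeometricCoefficient_succ (a := a) (b := b) hcn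
  simpa only [hcoeff] using (hasSum_ordinaryHypergeometricCoefficient hc habc).mul_left (t 0)

theorem hasSum_of_shifted_hypergeometric_recurrence {t : ℕ → ℝ} (ha : a ≠ 0) (hb : b ≠ 0)
    (hc : 0 < c) (habc : a + b < c)
    (ht : ∀ n : ℕ, ((n : ℝ) + 2) * (c + n + 1) * t (n + 1) = (a + n + 1) * (b + n + 1) * t n) :
    HasSum t (t 0 * (c / (a * b)) * (Real.Gamma c * Real.Gamma (c - a - b) /
      (Real.Gamma (c - a) * Real.Gamma (c - b)) - 1)) := by
  let s : ℕ → ℝ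
    | 0 => t 0 * (c / (a * b))
    | n + 1 => t n
  have hs (n : ℕ) : ((n : ℝ) + 1) * (c + n) * s (n + 1) = (a + n) * (b + n) * s n := by
    cases n with
    | zero => simp only [s, Nat.cast_zero]; field_simp; ring
    | succ n => simp only [s]; push_cast; linear_combination ht n
  have h : HasSum t _ := (hasSum_nat_add_iff' 1).2 (hasSum_of_hypergeometric_recurrence hc habc hs)
  rw [Finset.sum_range_one, ← mul_sub_one] at h
  exact h

end Real

theorem Gamma_one_add_mul_Gamma_one_sub {s : ℝ} (hs : s ≠ 0) :
    Real.Gamma (1 + s) * Real.Gamma (1 - s) = Real.pi * s / Real.sin (Real.pi * s) := by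
  rw [add_comm, Real.Gamma_add_one hs, mul_assoc, Real.Gamma_mul_Gamma_one_sub]
  ring

theorem Gamma_three_halves : Real.Gamma (3 / 2) = √Real.pi / 2 := by
  rw [show (3 / 2 : ℝ) = 1 / 2 + 1 by norm_num, Real.Gamma_add_one (by norm_num),
    Real.Gamma_one_half_eq]
  ring

theorem Gamma_five_halves : Real.Gamma (5 / 2) = 3 * √Real.pi / 4 := by
  rw [show (5 / 2 : ℝ) = 3 / 2 + 1 by norm_num, Real.Gamma_add_one (by norm_num),
    Gamma_three_halves]
  ring

theorem Gamma_seven_sixths_mul_Gamma_five_sixths :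
    Real.Gamma (7 / 6) * Real.Gamma (5 / 6) = Real.pi / 3 := by
  have hrefl := Gamma_one_add_mul_Gamma_one_sub (s := 1 / 6) (by norm_num)
  rw [mul_one_div, Real.sin_pi_div_six] at hrefl
  convert hrefl using 1
  · norm_num
  · ring

theorem Gamma_five_thirds_mul_Gamma_four_thirds :
    Real.Gamma (5 / 3) * Real.Gamma (4 / 3) = 4 * Real.pi / (9 * √3) := by
  have hrefl := Gamma_one_add_mul_Gamma_one_sub (s := 1 / 3) (by norm_num)
  have hadd : Real.Gamma (5 / 3) = 2 / 3 * Real.Gamma (2 / 3) := by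
    convert Real.Gamma_add_one (s := 2 / 3) (by norm_num) using 2
    norm_num
  rw [mul_one_div, Real.sin_pi_div_three, show (1 : ℝ) + 1 / 3 = 4 / 3 by norm_num,
    show (1 : ℝ) - 1 / 3 = 2 / 3 by norm_num] at hrefl
  rw [hadd]
  linear_combination 2 / 3 * hrefl

/-- The summand `(12√3)^{-(k+1)} #T¹(1,k+1)` of `Z(1)`, indexed from `k = 0`. -/
noncomputable def oneGonTerm (k : ℕ) : ℝ :=
  ((12 * √3)⁻¹) ^ (k + 1) *
    ((4 : ℝ) ^ k * (Nat.doubleFactorial (3 * k) : ℝ) /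
      ((Nat.factorial (k + 1) : ℝ) * (Nat.doubleFactorial (k + 2) : ℝ)) * 2)

theorem inv_twelve_mul_sqrt_three_sq : ((12 * √3)⁻¹) ^ 2 = 1 / 432 := by
  rw [inv_pow, mul_pow, Real.sq_sqrt (by norm_num)]
  norm_num

theorem oneGonTerm_zero : oneGonTerm 0 = √3 / 36 := by
  have h3 : √3 ^ 2 = 3 := Real.sq_sqrt (by norm_num)
  norm_num [oneGonTerm, Nat.doubleFactorial, -mul_inv_rev]
  field_simp
  norm_num [h3]

theorem oneGonTerm_one : oneGonTerm 1 = 1 / 108 := by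
  rw [oneGonTerm, one_add_one_eq_two, inv_twelve_mul_sqrt_three_sq]
  norm_num [Nat.doubleFactorial, Nat.factorial]

theorem oneGonTerm_add_two (k : ℕ) :
    ((k : ℝ) + 3) * (k + 4) * oneGonTerm (k + 2) = (((k : ℝ) + 1) ^ 2 - 1 / 9) * oneGonTerm k := by
  have hdf : Nat.doubleFactorial (3 * (k + 2)) =
      (3 * k + 6) * ((3 * k + 4) * ((3 * k + 2) * Nat.doubleFactorial (3 * k))) := rfl
  simp only [oneGonTerm, add_right_comm k 2 1, pow_add _ (k + 1) 2, inv_twelve_mul_sqrt_three_sq,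
    hdf, Nat.doubleFactorial_add_two (k + 2), Nat.factorial_succ]
  push_cast
  field_simp
  ring

theorem hasSum_oneGonTerm_even : HasSum (fun j => oneGonTerm (2 * j)) (√3 / 32) := by
  have h := hasSum_of_shifted_hypergeometric_recurrence (a := -2 / 3) (b := -1 / 3) (c := 1 / 2)
    (t := fun j => oneGonTerm (2 * j))
    (by norm_num) (by norm_num) (by norm_num) (by norm_num) fun j => by
      have h := oneGonTerm_add_two (2 * j)
      push_cast at h
      linear_combination h / 4
  have hGamma : Real.Gamma (1 / 2) * Real.Gamma (1 / 2 - -2 / 3 - -1 / 3) /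
      (Real.Gamma (1 / 2 - -2 / 3) * Real.Gamma (1 / 2 - -1 / 3)) = 3 / 2 := by
    norm_num only
    rw [Gamma_seven_sixths_mul_Gamma_five_sixths, Real.Gamma_one_half_eq,
      Gamma_three_halves, mul_div_assoc', Real.mul_self_sqrt Real.pi_nonneg]
    field_simp
  convert h using 1
  rw [hGamma, oneGonTerm_zero]
  ring

theorem hasSum_oneGonTerm_odd :
    HasSum (fun j => oneGonTerm (2 * j + 1)) (1 / 2 - 9 * √3 / 32) := by
  have h := hasSum_of_shifted_hypergeometric_recurrence (a := -1 / 6) (b := 1 / 6) (c := 3 / 2)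
    (t := fun j => oneGonTerm (2 * j + 1))
    (by norm_num) (by norm_num) (by norm_num) (by norm_num) fun j => by
      have h := oneGonTerm_add_two (2 * j + 1)
      push_cast at h
      linear_combination h / 4
  have hGamma : Real.Gamma (3 / 2) * Real.Gamma (3 / 2 - -1 / 6 - 1 / 6) /
      (Real.Gamma (3 / 2 - -1 / 6) * Real.Gamma (3 / 2 - 1 / 6)) = 9 * √3 / 16 := by
    norm_num only
    rw [Gamma_five_thirds_mul_Gamma_four_thirds, Gamma_three_halves, div_mul_div_comm,
      Real.mul_self_sqrt Real.pi_nonneg]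
    field_simp
    norm_num
  convert h using 1
  rw [hGamma, oneGonTerm_one]
  ring

theorem hasSum_oneGonTerm : HasSum oneGonTerm (1 / 2 - √3 / 4) := by
  convert hasSum_oneGonTerm_even.even_add_odd hasSum_oneGonTerm_odd using 1
  ring

/-- The step probability `q_{-(j+1)} = 2 Z(j+2) 12^{-(j+1)}`, of swallowing `j + 1` boundary
edges; the step `q_0` is left out because `Z(1)` is given by a series instead of the product
formula. At `j = 0`, truncated subtraction turns `(-1)!! = 1` into `0!! = 1`. -/
noncomputable def swallowProb (j : ℕ) : ℝ :=
  2 * (6 ^ (j + 2) * (Nat.doubleFactorial (2 * (j + 2) - 5) : ℝ) /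
    (8 * √3 * (Nat.factorial (j + 2) : ℝ))) * ((12 : ℝ) ^ (j + 1))⁻¹

theorem swallowProb_zero : swallowProb 0 = √3 / 8 := by
  have h3 : √3 ^ 2 = 3 := Real.sq_sqrt (by norm_num)
  simp only [swallowProb, Nat.factorial]
  field_simp
  norm_num [h3]

theorem swallowProb_succ (j : ℕ) :
    2 * ((j : ℝ) + 3) * swallowProb (j + 1) = (2 * (j : ℝ) + 1) * swallowProb j := by
  have hdf : Nat.doubleFactorial (2 * (j + 3) - 5) =
      (2 * j + 1) * Nat.doubleFactorial (2 * (j + 2) - 5) := by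
    cases j with
    | zero => rfl
    | succ i => exact Nat.doubleFactorial_add_two (2 * i + 1)
  simp only [swallowProb, add_assoc, Nat.reduceAdd, hdf, Nat.factorial_succ (j + 2)]
  push_cast
  field_simp
  ring

theorem hasSum_swallowProb : HasSum swallowProb (√3 / 6) := by
  have h := hasSum_of_hypergeometric_recurrence (a := 1 / 2) (b := 1) (c := 3) (t := swallowProb)
    (by norm_num) (by norm_num) fun j => by
      linear_combination (j + 1) / 2 * swallowProb_succ j
  have hGamma : Real.Gamma 3 * Real.Gamma (3 - 1 / 2 - 1) /
      (Real.Gamma (3 - 1 / 2) * Real.Gamma (3 - 1)) = 4 / 3 := by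
    norm_num [Gamma_three_halves, Gamma_five_halves]
    field_simp
  convert h using 1
  rw [hGamma, swallowProb_zero]
  ring

theorem hasSum_succ_mul_swallowProb :
    HasSum (fun j : ℕ => ((j : ℝ) + 1) * swallowProb j) (√3 / 3) := by
  have h := hasSum_of_hypergeometric_recurrence (a := 1 / 2) (b := 2) (c := 3)
    (t := fun j : ℕ => ((j : ℝ) + 1) * swallowProb j) (by norm_num) (by norm_num) fun j => by
      push_cast
      linear_combination (j + 1) * (j + 2) / 2 * swallowProb_succ j
  have hGamma : Real.Gamma 3 * Real.Gamma (3 - 1 / 2 - 2) /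
      (Real.Gamma (3 - 1 / 2) * Real.Gamma (3 - 2)) = 8 / 3 := by
    norm_num [Real.Gamma_one_half_eq, Gamma_five_halves]
    field_simp
    norm_num
  convert h using 1
  rw [hGamma, swallowProb_zero]
  ring

/-- Let `q_1 = 1/√3` and, for `m ≥ 0`, let `q_{-m} = 2·Z(m+1)·12^{-m}`
be the step probabilities of the peeling process of the type I UIPT, where
`Z(m) = 6^m (2m-5)!!/(8√3·m!)` for `m ≥ 2` (with the convention `(-1)!! = 1`,
realized via truncated subtraction on `ℕ`), and `Z(1)` is the Boltzmann partition
function of type I triangulations of the `1`-gon,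
`Z(1) = ∑_{k≥1} (12√3)^{-k} #T¹(1,k)`.  Then `(q_k)_{k ≤ 1}` is a probability
distribution on `{…,-1,0,1}` with mean zero: `∑_{k≤1} q_k = 1` and `∑_{k≤1} k·q_k = 0`. -/
theorem statement10 (Z : ℕ → ℝ)
    (hZ : ∀ m : ℕ, 2 ≤ m →
      Z m = 6 ^ m * (Nat.doubleFactorial (2 * m - 5) : ℝ) /
        (8 * Real.sqrt 3 * (Nat.factorial m : ℝ)))
    (hZ1 : Z 1 = ∑' k : ℕ,
      ((12 * Real.sqrt 3)⁻¹) ^ (k + 1) *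
        ((4 : ℝ) ^ k * (Nat.doubleFactorial (3 * k) : ℝ) /
            ((Nat.factorial (k + 1) : ℝ) * (Nat.doubleFactorial (k + 2) : ℝ)) * 2)) :
    (1 / Real.sqrt 3 + ∑' m : ℕ, 2 * Z (m + 1) * ((12 : ℝ) ^ m)⁻¹ = 1) ∧
      1 / Real.sqrt 3 - ∑' m : ℕ, (m : ℝ) * (2 * Z (m + 1) * ((12 : ℝ) ^ m)⁻¹) = 0 := by
  have hq (j : ℕ) : 2 * Z (j + 1 + 1) * ((12 : ℝ) ^ (j + 1))⁻¹ = swallowProb j := by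
    rw [hZ (j + 1 + 1) (by omega), swallowProb]
  have hZ1' : Z 1 = 1 / 2 - Real.sqrt 3 / 4 := hZ1.trans hasSum_oneGonTerm.tsum_eq
  have hsum : HasSum (fun m : ℕ => 2 * Z (m + 1) * ((12 : ℝ) ^ m)⁻¹)
      (2 * Z (0 + 1) * ((12 : ℝ) ^ 0)⁻¹ + Real.sqrt 3 / 6) :=
    HasSum.zero_add (by simpa only [hq] using hasSum_swallowProb)
  have hmean : HasSum (fun m : ℕ => (m : ℝ) * (2 * Z (m + 1) * ((12 : ℝ) ^ m)⁻¹))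
      ((0 : ℕ) * (2 * Z (0 + 1) * ((12 : ℝ) ^ 0)⁻¹) + Real.sqrt 3 / 3) :=
    HasSum.zero_add (by simpa only [hq, Nat.cast_succ] using hasSum_succ_mul_swallowProb)
  have hinv : 1 / Real.sqrt 3 = Real.sqrt 3 / 3 := Real.sqrt_div_self'.symm
  rw [hsum.tsum_eq, hmean.tsum_eq, hinv, zero_add, hZ1']
  constructor <;> ring
end
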